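/- arXiv:2512.20472 — 4 statements merged into one kernel-verified Lean document; each statement's English description precedes it below -/
import Mathlib

section
/- Let V be a nonzero finite-dimensional complex vector space, γ ∈ GL(V) of finite order, ζ ∈ ℂ a root of unity, and x ∈ End(V) satisfying γ∘x = ζ·(x∘γ). Assume V is indecomposable for the pair (γ, x), meaning: whenever V = M ⊕ M' is a direct sum of two subspaces each invariant under both γ and x, one of M, M' is zero. Then there exists an eigenvector v of γ such that the set {x^k v : k ∈ ℕ} spans V (a homogeneous cyclic generator). -/
open Polynomial Module

/-- An endomorphism of finite multiplicative order over `ℂ` is diagonalizable. -/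
lemma iSup_eigenspace_eq_top_of_pow_eq_one {V : Type*} [AddCommGroup V] [Module ℂ V]
    [FiniteDimensional ℂ V] {g : End ℂ V} {N : ℕ} (hN : 0 < N) (hg : g ^ N = 1) :
    ⨆ μ, g.eigenspace μ = ⊤ := by
  have hsep : (X ^ N - C (1 : ℂ)).Separable :=
    separable_X_pow_sub_C 1 (by exact_mod_cast hN.ne') one_ne_zero
  exact (End.isSemisimple_of_squarefree_aeval_eq_zero hsep.squarefree
    (by simp [hg])).iSup_eigenspace_eq_top

/-- If the eigenspaces of `g` span, a nonzero map does not vanish on some eigenvector of `g`. -/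
lemma exists_eigenvector_apply_ne_zero {V : Type*} [AddCommGroup V] [Module ℂ V]
    {g s : End ℂ V} (hg : ⨆ μ, g.eigenspace μ = ⊤) (hs : s ≠ 0) :
    ∃ (v : V) (μ : ℂ), g v = μ • v ∧ s v ≠ 0 := by
  by_contra! h
  refine hs (LinearMap.ker_eq_top.mp (top_le_iff.mp (hg ▸ iSup_le fun μ v hv => ?_)))
  exact h v μ (End.mem_eigenspace_iff.mp hv)

/-- An eigenvector of `g` outside an invariant subspace is detected by a `g`-eigenfunctional
vanishing on that subspace. -/
lemma exists_eigenfunctional {V : Type*} [AddCommGroup V] [Module ℂ V]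
    {g : End ℂ V} {N : ℕ} (hN : 0 < N) (hg : g ^ N = 1) {W : Submodule ℂ V}
    (hW : ∀ w ∈ W, g w ∈ W) {u : V} {μ : ℂ} (hu : g u = μ • u) (huW : u ∉ W) :
    ∃ f : Dual ℂ V, (∀ w, f (g w) = μ * f w) ∧ (∀ w ∈ W, f w = 0) ∧ f u ≠ 0 := by
  have hpow : ∀ i : ℕ, (g ^ i) u = μ ^ i • u := by
    intro i
    induction i with
    | zero => simp
    | succ i ih => rw [pow_succ', End.mul_apply, ih, map_smul, hu, smul_smul, pow_succ]
  have hu0 : u ≠ 0 := fun h => huW (h ▸ W.zero_mem)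
  have hμ : μ ^ N = 1 := by
    have h := hpow N
    rw [hg, End.one_apply] at h
    exact (smul_left_injective ℂ hu0 (by simpa using h)).symm
  have hμ0 : μ ≠ 0 := by
    rintro rfl
    simp [hN.ne'] at hμ
  set a : End ℂ V := algebraMap ℂ _ μ with ha
  set P : End ℂ V := ∑ i ∈ Finset.range N, g ^ i * a ^ (N - 1 - i) with hP
  have hPapp : ∀ w, P w = ∑ i ∈ Finset.range N, μ ^ (N - 1 - i) • (g ^ i) w := by
    intro w
    simp [hP, ha, ← map_pow, LinearMap.sum_apply, algebraMap_end_apply]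
  have hPg : P * (g - a) = 0 := by
    rw [hP, (Algebra.commute_algebraMap_right μ g).geom_sum₂_mul, hg, ← map_pow, hμ, map_one, sub_self]
  have hPW : ∀ w ∈ W, P w ∈ W := by
    intro w hw
    rw [hPapp]
    refine W.sum_mem fun i hi => W.smul_mem _ ?_
    clear hi
    induction i with
    | zero => simpa
    | succ i ih => rw [pow_succ', End.mul_apply]; exact hW _ ih
  have hPu : P u = ((N : ℂ) * μ ^ (N - 1)) • u := by
    rw [hPapp, Finset.sum_congr rfl (g := fun _ => μ ^ (N - 1) • u)]
    · simp [mul_smul, Nat.cast_smul_eq_nsmul]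
    · intro i hi
      rw [hpow, smul_smul, ← pow_add, Nat.sub_add_cancel (by grind)]
  have hnot : u ∉ W ⊔ LinearMap.range (g - a) := by
    intro h
    obtain ⟨w, hw, _, ⟨z, rfl⟩, hz⟩ := Submodule.mem_sup.mp h
    have h1 : P u = P w := by
      rw [← hz, map_add, ← End.mul_apply, hPg]
      simp
    have h2 := hPW w hw
    rw [← h1, hPu] at h2
    exact huW ((W.smul_mem_iff (mul_ne_zero (by exact_mod_cast hN.ne') (pow_ne_zero _ hμ0))).mp h2)
  obtain ⟨f, hfu, hf⟩ := Submodule.exists_le_ker_of_notMem hnot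
  refine ⟨f, fun w => ?_, fun w hw => hf (Submodule.mem_sup_left hw), hfu⟩
  have : f ((g - a) w) = 0 := hf (Submodule.mem_sup_right ⟨w, rfl⟩)
  simpa [ha, sub_eq_zero, algebraMap_end_apply] using this

/-- A `ζ`-commutation relation moves through powers. -/
lemma apply_pow_of_apply_eq_smul {V : Type*} [AddCommGroup V] [Module ℂ V]
    {g x : End ℂ V} {ζ : ℂ} (hx : ∀ w, g (x w) = ζ • x (g w)) (k : ℕ) (w : V) :
    g ((x ^ k) w) = ζ ^ k • (x ^ k) (g w) := by
  induction k generalizing w with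
  | zero => simp
  | succ k ih => rw [pow_succ', End.mul_apply, hx, ih, map_smul, smul_smul, End.mul_apply, pow_succ']

/-- A `ζ`-commutation relation moves through polynomials, rescaling the variable. -/
lemma apply_aeval_of_apply_eq_smul {V : Type*} [AddCommGroup V] [Module ℂ V]
    {g x : End ℂ V} {ζ : ℂ} (hx : ∀ w, g (x w) = ζ • x (g w)) (q : ℂ[X]) (w : V) :
    g (aeval x q w) = aeval x (q.comp (C ζ * X)) (g w) := by
  induction q using Polynomial.induction_on' with
  | add p q hp hq => simp only [map_add, LinearMap.add_apply, add_comp, hp, hq]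
  | monomial k a =>
    rw [← C_mul_X_pow_eq_monomial]
    rw [mul_comp, C_comp, X_pow_comp, mul_pow, ← C_pow, map_mul, map_mul, map_mul, map_pow,
      aeval_X, aeval_C, aeval_C]
    simp only [End.mul_apply, algebraMap_end_apply, map_smul, apply_pow_of_apply_eq_smul hx]
    exact smul_comm _ _ _

/-- A polynomial in `S` with `S - c` nilpotent is a unit times a power of `S - c`. -/
lemma exists_isUnit_mul_pow_eq_aeval {V : Type*} [AddCommGroup V] [Module ℂ V]
    {S : End ℂ V} {c : ℂ} (hS : IsNilpotent (S - algebraMap ℂ _ c)) {q : ℂ[X]} (hq : q ≠ 0) :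
    ∃ (i : ℕ) (U : End ℂ V), IsUnit U ∧ aeval S q = U * (S - algebraMap ℂ _ c) ^ i := by
  obtain ⟨u, hu, hdvd⟩ := exists_eq_pow_rootMultiplicity_mul_and_not_dvd q hq c
  refine ⟨q.rootMultiplicity c, aeval S u, ?_, ?_⟩
  · obtain ⟨N, hN⟩ := hS
    obtain ⟨a, b, hab⟩ : IsCoprime u ((X - C c) ^ N) :=
      (((irreducible_X_sub_C c).coprime_iff_not_dvd).mpr hdvd).symm.pow_right
    have h1 : aeval S a * aeval S u = 1 := by
      simpa [hN] using congrArg (aeval S) hab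
    have h2 : aeval S u * aeval S a = 1 := by rw [← map_mul, mul_comm, map_mul, h1]
    exact ⟨⟨aeval S u, aeval S a, h2, h1⟩, rfl⟩
  · conv_lhs => rw [hu, mul_comm]
    simp

/-- A polynomial all of whose exponents are congruent modulo `n` is a monomial times a
polynomial in `X ^ n`. -/
lemma exists_eq_X_pow_mul_expand {n : ℕ} {q : ℂ[X]} {d : ℕ}
    (hq : ∀ k, q.coeff k ≠ 0 → k ≡ d [MOD n]) :
    ∃ g : ℂ[X], q = X ^ (d % n) * expand ℂ n g := by
  have hmod : ∀ k, q.coeff k ≠ 0 → k = n * (k / n) + d % n := fun k hk => by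
    rw [← hq k hk, Nat.div_add_mod]
  refine ⟨∑ k ∈ q.support, C (q.coeff k) * X ^ (k / n), ?_⟩
  rw [map_sum, Finset.mul_sum]
  conv_lhs => rw [q.as_sum_support_C_mul_X_pow]
  refine Finset.sum_congr rfl fun k hk => ?_
  have hpow : (X : ℂ[X]) ^ k = X ^ (d % n) * (X ^ n) ^ (k / n) := by
    rw [← pow_mul, ← pow_add, add_comm, ← hmod k (mem_support_iff.mp hk)]
  rw [map_mul, expand_C, map_pow, expand_X, hpow]
  ring

/-- If `(g, x)` is indecomposable, an endomorphism commuting with both is a scalar plus a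
nilpotent. -/
lemma exists_isNilpotent_sub_algebraMap {V : Type*} [AddCommGroup V] [Module ℂ V]
    [FiniteDimensional ℂ V] [Nontrivial V] {g x T : End ℂ V}
    (hgT : Commute g T) (hxT : Commute x T)
    (hind : ∀ M M' : Submodule ℂ V,
      (∀ v ∈ M, g v ∈ M) → (∀ v ∈ M, x v ∈ M) →
      (∀ v ∈ M', g v ∈ M') → (∀ v ∈ M', x v ∈ M') →
      IsCompl M M' → M = ⊥ ∨ M' = ⊥) :
    ∃ c : ℂ, IsNilpotent (T - algebraMap ℂ _ c) := by
  obtain ⟨c, hc⟩ := End.exists_eigenvalue T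
  refine ⟨c, ?_⟩
  set y := T - algebraMap ℂ (End ℂ V) c with hy
  obtain ⟨N, hN⟩ := Filter.eventually_atTop.mp y.eventually_isCompl_ker_pow_range_pow
  have hcomm : ∀ z : End ℂ V, Commute z T → Commute z (y ^ (N + 1)) := fun z hz =>
    (hz.sub_right (Algebra.commute_algebraMap_right c z)).pow_right _
  have hker : ∀ z : End ℂ V, Commute z T → ∀ v ∈ LinearMap.ker (y ^ (N + 1)),
      z v ∈ LinearMap.ker (y ^ (N + 1)) := fun z hz v hv => by
    rw [LinearMap.mem_ker] at hv ⊢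
    rw [← End.mul_apply, ← (hcomm z hz).eq, End.mul_apply, hv, map_zero]
  have hrange : ∀ z : End ℂ V, Commute z T → ∀ v ∈ LinearMap.range (y ^ (N + 1)),
      z v ∈ LinearMap.range (y ^ (N + 1)) := by
    rintro z hz _ ⟨w, rfl⟩
    exact ⟨z w, by rw [← End.mul_apply, ← (hcomm z hz).eq, End.mul_apply]⟩
  rcases hind _ _ (hker g hgT) (hker x hxT) (hrange g hgT) (hrange x hxT)
    (hN (N + 1) N.le_succ) with h | h
  · obtain ⟨v, hv⟩ := hc.exists_hasEigenvector
    refine absurd ?_ hv.2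
    have hyv : y v = 0 := by simp [hy, hv.apply_eq_smul, algebraMap_end_apply]
    rw [← Submodule.mem_bot ℂ, ← h, LinearMap.mem_ker, pow_succ, End.mul_apply, hyv, map_zero]
  · exact ⟨N + 1, LinearMap.range_eq_bot.mp h⟩

/-- In the indecomposable case, there is a nilpotent `y` such that every polynomial in `x` whose
exponents are congruent modulo the order of `ζ` is a unit times a power of `y`. -/
lemma exists_isNilpotent_forall_aeval_eq_isUnit_mul_pow {V : Type*} [AddCommGroup V]
    [Module ℂ V] [FiniteDimensional ℂ V] [Nontrivial V] {g x : End ℂ V} {ζ : ℂ}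
    (hζ : 0 < orderOf ζ) (hx : ∀ w, g (x w) = ζ • x (g w))
    (hind : ∀ M M' : Submodule ℂ V,
      (∀ v ∈ M, g v ∈ M) → (∀ v ∈ M, x v ∈ M) →
      (∀ v ∈ M', g v ∈ M') → (∀ v ∈ M', x v ∈ M') →
      IsCompl M M' → M = ⊥ ∨ M' = ⊥) :
    ∃ y : End ℂ V, IsNilpotent y ∧ ∀ (q : ℂ[X]) (d : ℕ), q ≠ 0 →
      (∀ k, q.coeff k ≠ 0 → k ≡ d [MOD orderOf ζ]) →
      ∃ (i : ℕ) (U : End ℂ V), IsUnit U ∧ aeval x q = U * y ^ i := by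
  set n := orderOf ζ
  have hgT : Commute g (x ^ n) := by
    ext w
    simp [apply_pow_of_apply_eq_smul hx, n, pow_orderOf_eq_one]
  obtain ⟨c, hc⟩ := exists_isNilpotent_sub_algebraMap hgT (Commute.self_pow x n) hind
  rcases eq_or_ne c 0 with rfl | hc0
  · have hxnil : IsNilpotent (x - algebraMap ℂ _ 0) := by
      rw [map_zero, sub_zero] at hc ⊢
      exact hc.of_pow
    exact ⟨_, hxnil, fun q _ hq _ => exists_isUnit_mul_pow_eq_aeval hxnil hq⟩
  · refine ⟨_, hc, fun q d hq hd => ?_⟩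
    have hTunit : IsUnit (x ^ n) := by
      have h := hc.isUnit_add_left_of_commute
        ((isUnit_iff_ne_zero.mpr hc0).map (algebraMap ℂ (End ℂ V)))
        (Algebra.commute_algebraMap_right c _)
      simpa using h
    have hxunit : IsUnit x := (isUnit_pow_iff hζ.ne').mp hTunit
    obtain ⟨p, rfl⟩ := exists_eq_X_pow_mul_expand hd
    have hp : p ≠ 0 := by
      rintro rfl
      simp at hq
    obtain ⟨i, U, hU, hpU⟩ := exists_isUnit_mul_pow_eq_aeval hc hp
    refine ⟨i, x ^ (d % n) * U, (hxunit.pow _).mul hU, ?_⟩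
    rw [map_mul, expand_aeval, hpU, map_pow, aeval_X, mul_assoc]

/-- A monic annihilating polynomial of minimal degree divides all annihilating polynomials. -/
lemma exists_monic_aeval_apply_eq_zero_forall_dvd {V : Type*} [AddCommGroup V] [Module ℂ V]
    [FiniteDimensional ℂ V] (x : End ℂ V) (v : V) :
    ∃ q : ℂ[X], q.Monic ∧ aeval x q v = 0 ∧ ∀ p : ℂ[X], aeval x p v = 0 → q ∣ p := by
  let I : Ideal ℂ[X] :=
    { carrier := {p | aeval x p v = 0}
      add_mem' := fun {p q} hp hq => by
        simp only [Set.mem_ofPred_eq] at hp hq ⊢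
        rw [map_add, LinearMap.add_apply, hp, hq, add_zero]
      zero_mem' := by simp
      smul_mem' := fun a p hp => by
        simp only [Set.mem_ofPred_eq] at hp ⊢
        rw [smul_eq_mul, map_mul, End.mul_apply, hp, map_zero] }
  obtain ⟨p, hp⟩ := (IsPrincipalIdealRing.principal I).principal
  have hmem : ∀ r, aeval x r v = 0 ↔ p ∣ r := fun r => by
    rw [← Ideal.mem_span_singleton, ← Ideal.submodule_span_eq, ← hp]
    exact Iff.rfl
  have hp0 : p ≠ 0 := by
    rintro rfl
    exact minpoly.ne_zero (Algebra.IsIntegral.isIntegral (R := ℂ) x)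
      (zero_dvd_iff.mp ((hmem _).mp (by simp)))
  have hassoc := associated_normalize p
  refine ⟨normalize p, monic_normalize hp0, (hmem _).mpr hassoc.dvd, fun r hr => ?_⟩
  exact hassoc.symm.dvd.trans ((hmem r).mp hr)

/-- The exponents of the minimal annihilating polynomial of an eigenvector are congruent modulo
the order of `ζ`. -/
lemma modEq_of_coeff_ne_zero_of_forall_dvd {V : Type*} [AddCommGroup V] [Module ℂ V]
    {g x : End ℂ V} {ζ : ℂ} (hζ : 0 < orderOf ζ) (hx : ∀ w, g (x w) = ζ • x (g w))
    {v : V} {μ : ℂ} (hμ : μ ≠ 0) (hv : g v = μ • v) {q : ℂ[X]} (hq : q.Monic)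
    (hqv : aeval x q v = 0) (hmin : ∀ p : ℂ[X], aeval x p v = 0 → q ∣ p)
    {k : ℕ} (hk : q.coeff k ≠ 0) : k ≡ q.natDegree [MOD orderOf ζ] := by
  have hcomp : aeval x (q.comp (C ζ * X)) v = 0 := by
    have h := apply_aeval_of_apply_eq_smul hx q v
    rw [hqv, map_zero, hv, map_smul] at h
    exact (smul_eq_zero.mp h.symm).resolve_left hμ
  set r := q.comp (C ζ * X) - C (ζ ^ q.natDegree) * q with hr
  have hrv : aeval x r v = 0 := by simp [hr, hcomp, hqv]
  have hcoeff : ∀ j, r.coeff j = q.coeff j * (ζ ^ j - ζ ^ q.natDegree) := fun j => by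
    rw [hr, coeff_sub, comp_C_mul_X_coeff, coeff_C_mul]
    ring
  have hdeg : r.degree < q.degree := by
    rw [degree_eq_natDegree hq.ne_zero, degree_lt_iff_coeff_zero]
    intro j hj
    rw [hcoeff]
    rcases hj.eq_or_lt with rfl | hj
    · simp
    · simp [coeff_eq_zero_of_natDegree_lt hj]
  have hr0 : r = 0 := eq_zero_of_dvd_of_degree_lt (hmin r hrv) hdeg
  have h := hcoeff k
  rw [hr0, coeff_zero, eq_comm, mul_eq_zero, or_iff_right hk, sub_eq_zero] at h
  exact ((orderOf_pos_iff.mp hζ).pow_eq_pow_iff_modEq).mp h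

/-- A homogeneous vector whose annihilator is that of the whole space generates an invariant
subspace with an invariant complement. -/
lemma exists_invariant_isCompl_range_aeval {V : Type*} [AddCommGroup V] [Module ℂ V]
    [FiniteDimensional ℂ V] {g x : End ℂ V} {N : ℕ} (hN : 0 < N) (hg : g ^ N = 1)
    {ζ : ℂ} (hζ : ζ ≠ 0) (hx : ∀ w, g (x w) = ζ • x (g w))
    {v : V} {μ : ℂ} (hv0 : v ≠ 0) (hv : g v = μ • v) {q : ℂ[X]} (hq : q.Monic)
    (hqx : aeval x q = 0) (hmin : ∀ p : ℂ[X], aeval x p v = 0 → q ∣ p) :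
    ∃ M : Submodule ℂ V, (∀ w ∈ M, g w ∈ M) ∧ (∀ w ∈ M, x w ∈ M) ∧
      IsCompl (LinearMap.range (LinearMap.applyₗ v ∘ₗ (aeval x).toLinearMap)) M := by
  set L : ℂ[X] →ₗ[ℂ] V := LinearMap.applyₗ v ∘ₗ (aeval x).toLinearMap with hL
  have hLapp : ∀ p, L p = aeval x p v := fun p => rfl
  have hLlt : ∀ p : ℂ[X], L p = 0 → p.degree < q.degree → p = 0 := fun p hp hd =>
    eq_zero_of_dvd_of_degree_lt (hmin p hp) hd
  obtain ⟨e, he⟩ : ∃ e, q.natDegree = e + 1 := by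
    refine Nat.exists_eq_add_one.mpr (Nat.pos_of_ne_zero fun h => hv0 ?_)
    rw [eq_one_of_monic_natDegree_zero hq h, map_one] at hqx
    simpa using LinearMap.congr_fun hqx v
  have hqdeg : q.degree = ((e + 1 : ℕ) : WithBot ℕ) := by
    rw [degree_eq_natDegree hq.ne_zero, he]
  have hgL : ∀ p, g (L p) = μ • L (p.comp (C ζ * X)) := fun p => by
    rw [hLapp, apply_aeval_of_apply_eq_smul hx, hv, map_smul, hLapp]
  obtain ⟨f, hfg, hfW, hfu⟩ : ∃ f : Dual ℂ V, (∀ w, f (g w) = ζ ^ e * μ * f w) ∧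
      (∀ w ∈ (degreeLT ℂ e).map L, f w = 0) ∧ f (L (X ^ e)) ≠ 0 := by
    refine exists_eigenfunctional hN hg ?_ ?_ ?_
    · rintro _ ⟨p, hp, rfl⟩
      rw [hgL]
      refine Submodule.smul_mem _ _ ⟨_, ?_, rfl⟩
      rw [SetLike.mem_coe, mem_degreeLT, degree_lt_iff_coeff_zero] at hp ⊢
      intro j hj
      rw [comp_C_mul_X_coeff, hp j hj, zero_mul]
    · rw [hgL, X_pow_comp, mul_pow, ← C_pow, ← smul_eq_C_mul, map_smul, smul_smul, mul_comm]
    · rintro ⟨p, hp, hpe⟩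
      rw [SetLike.mem_coe, mem_degreeLT] at hp
      have hlt : p.degree < (X ^ e : ℂ[X]).degree := by rwa [degree_X_pow]
      have hd : (X ^ e - p).degree = (e : WithBot ℕ) := by
        rw [degree_sub_eq_left_of_degree_lt hlt, degree_X_pow]
      have h0 := hLlt (X ^ e - p) (by rw [map_sub, hpe, sub_self])
        (by rw [hd, hqdeg]; exact_mod_cast e.lt_succ_self)
      simp [h0] at hd
  let Φ : V →ₗ[ℂ] (Fin (e + 1) → ℂ) := LinearMap.pi fun k => f ∘ₗ x ^ (k : ℕ)
  have hker : ∀ w, w ∈ LinearMap.ker Φ ↔ ∀ p : ℂ[X], f (aeval x p w) = 0 := by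
    intro w
    constructor
    · intro hw p
      have hwk : ∀ k, k < e + 1 → f ((x ^ k) w) = 0 := fun k hk =>
        congrFun (LinearMap.mem_ker.mp hw) ⟨k, hk⟩
      rw [← modByMonic_add_div p q, map_add, map_mul, hqx, zero_mul, add_zero,
        aeval_eq_sum_range' (n := e + 1)]
      · rw [LinearMap.sum_apply, map_sum]
        refine Finset.sum_eq_zero fun k hk => ?_
        rw [LinearMap.smul_apply, map_smul, hwk k (Finset.mem_range.mp hk), smul_zero]
      · rw [← he]
        exact natDegree_modByMonic_lt p hq (by rintro rfl; simp at he)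
    · intro hw
      ext k
      simpa [Φ] using hw (X ^ (k : ℕ))
  refine ⟨LinearMap.ker Φ, fun w hw => ?_, fun w hw => ?_, ?_⟩
  · rw [LinearMap.mem_ker]
    ext k
    have h1 : ζ ^ (k : ℕ) * f ((x ^ (k : ℕ)) (g w)) = 0 := by
      rw [← smul_eq_mul, ← map_smul, ← apply_pow_of_apply_eq_smul hx, hfg]
      have := (hker w).mp hw (X ^ (k : ℕ))
      rw [map_pow, aeval_X] at this
      rw [this, mul_zero]
    exact (mul_eq_zero.mp h1).resolve_left (pow_ne_zero _ hζ)
  · rw [hker] at hw ⊢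
    intro p
    have := hw (p * X)
    rwa [map_mul, aeval_X, End.mul_apply] at this
  · have hdisj : Disjoint (LinearMap.range L) (LinearMap.ker Φ) := by
      rw [Submodule.disjoint_def]
      rintro _ ⟨p, rfl⟩ hp
      have hmod : L p = L (p %ₘ q) := by
        conv_lhs => rw [← modByMonic_add_div p q, map_add, hLapp (q * _), map_mul, hqx]
        simp
      rw [hmod] at hp ⊢
      have hdeg := degree_modByMonic_lt p hq
      set r := p %ₘ q
      by_contra hr
      have hr0 : r ≠ 0 := by
        rintro h
        simp [h] at hr
      have hrn : r.natDegree ≤ e := by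
        rw [degree_eq_natDegree hr0, hqdeg] at hdeg
        exact Nat.lt_succ_iff.mp (by exact_mod_cast hdeg)
      have h1 := (hker _).mp hp (X ^ (e - r.natDegree))
      rw [hLapp, ← End.mul_apply, ← map_mul, ← hLapp] at h1
      set s := X ^ (e - r.natDegree) * r with hs
      have hsn : s.natDegree = e := by
        rw [hs, natDegree_X_pow_mul _ hr0]
        omega
      have hs0 : s ≠ 0 := mul_ne_zero (pow_ne_zero _ X_ne_zero) hr0
      have herase : f (L s.eraseLead) = 0 := by
        refine hfW _ ⟨_, ?_, rfl⟩
        rw [SetLike.mem_coe, mem_degreeLT]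
        have := degree_eraseLead_lt hs0
        rwa [degree_eq_natDegree hs0, hsn] at this
      rw [← eraseLead_add_C_mul_X_pow s, map_add, map_add, herase, zero_add, hsn,
        ← smul_eq_C_mul, map_smul, map_smul, smul_eq_mul] at h1
      exact (mul_ne_zero (leadingCoeff_ne_zero.mpr hs0) hfu) h1
    refine ⟨hdisj, codisjoint_iff.mpr ?_⟩
    have hrank : e + 1 ≤ finrank ℂ (LinearMap.range L) := by
      have hinj : Function.Injective (L.rangeRestrict ∘ₗ (degreeLT ℂ (e + 1)).subtype) := by
        rw [← LinearMap.ker_eq_bot, LinearMap.ker_eq_bot']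
        rintro ⟨p, hp⟩ hp0
        rw [mem_degreeLT] at hp
        exact Subtype.ext (hLlt p (congrArg Subtype.val hp0) (by rwa [hqdeg]))
      have h := LinearMap.finrank_le_finrank_of_injective hinj
      rwa [(degreeLTEquiv ℂ (e + 1)).finrank_eq, finrank_fin_fun] at h
    have hΦ := Φ.finrank_range_add_finrank_ker
    have hΦr : finrank ℂ (LinearMap.range Φ) ≤ e + 1 := by
      simpa using Submodule.finrank_le (LinearMap.range Φ)
    have hsum := Submodule.finrank_sup_add_finrank_inf_eq (LinearMap.range L) (LinearMap.ker Φ)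
    rw [hdisj.eq_bot, finrank_bot] at hsum
    apply Submodule.eq_top_of_finrank_eq
    have := Submodule.finrank_le (LinearMap.range L ⊔ LinearMap.ker Φ)
    omega

/-- If `(γ, x)` acts indecomposably on `V`, where `γ` has finite order, `ζ` is a root of
unity and `γ∘x = ζ·(x∘γ)`, then `V` admits a homogeneous cyclic generator: an eigenvector
`v` of `γ` whose `x`-orbit spans `V`. -/
theorem indecomposable_homogeneous_cyclic_generator
    {V : Type*} [AddCommGroup V] [Module ℂ V] [FiniteDimensional ℂ V] [Nontrivial V]
    (γ : V ≃ₗ[ℂ] V) (hγ : IsOfFinOrder γ)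
    (ζ : ℂ) (hζ : ∃ n : ℕ, 0 < n ∧ ζ ^ n = 1)
    (x : Module.End ℂ V)
    (hx : γ.toLinearMap ∘ₗ x = ζ • (x ∘ₗ γ.toLinearMap))
    (hind : ∀ M M' : Submodule ℂ V,
      (∀ v ∈ M, γ v ∈ M) → (∀ v ∈ M, x v ∈ M) →
      (∀ v ∈ M', γ v ∈ M') → (∀ v ∈ M', x v ∈ M') →
      IsCompl M M' → M = ⊥ ∨ M' = ⊥) :
    ∃ (v : V) (μ : ℂ), v ≠ 0 ∧ γ v = μ • v ∧
      Submodule.span ℂ (Set.range fun k : ℕ => (x ^ k) v) = ⊤ := by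
  obtain ⟨N, hN, hγN⟩ := isOfFinOrder_iff_pow_eq_one.mp hγ
  obtain ⟨n, hn, hζn⟩ := hζ
  have hζ0 : ζ ≠ 0 := by
    rintro rfl
    simp [hn.ne'] at hζn
  have hζord : 0 < orderOf ζ := orderOf_pos_iff.mpr (isOfFinOrder_iff_pow_eq_one.mpr ⟨n, hn, hζn⟩)
  set g : End ℂ V := γ.toLinearMap with hg
  have hgN : g ^ N = 1 := by
    have h := congrArg (LinearEquiv.automorphismGroup.toLinearMapMonoidHom) hγN
    rwa [map_pow, map_one] at h
  have hxg : ∀ w, g (x w) = ζ • x (g w) := fun w => LinearMap.congr_fun hx w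
  obtain ⟨y, hy, hyq⟩ := exists_isNilpotent_forall_aeval_eq_isUnit_mul_pow hζord hxg hind
  have hclass := pow_pred_nilpotencyClass hy
  obtain ⟨v, μ, hv, hyv⟩ := exists_eigenvector_apply_ne_zero
    (iSup_eigenspace_eq_top_of_pow_eq_one hN hgN) hclass
  have hv0 : v ≠ 0 := by
    rintro rfl
    simp at hyv
  have hμ : μ ≠ 0 := by
    rintro rfl
    rw [zero_smul] at hv
    exact hv0 (γ.map_eq_zero_iff.mp hv)
  obtain ⟨q, hq, hqv, hmin⟩ := exists_monic_aeval_apply_eq_zero_forall_dvd x v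
  have hqx : aeval x q = 0 := by
    obtain ⟨i, U, hU, hqU⟩ := hyq q q.natDegree hq.ne_zero fun k hk =>
      modEq_of_coeff_ne_zero_of_forall_dvd hζord hxg hμ hv hq hqv hmin hk
    have hyi : (y ^ i) v = 0 := by
      rw [hqU, End.mul_apply] at hqv
      exact ((End.isUnit_iff U).mp hU).injective (hqv.trans (map_zero U).symm)
    have hi : nilpotencyClass y ≤ i := by
      by_contra! h
      apply hyv
      rw [← Nat.sub_add_cancel (Nat.le_sub_one_of_lt h), pow_add, End.mul_apply, hyi, map_zero]
    rw [hqU, pow_eq_zero_of_le hi (pow_nilpotencyClass hy), mul_zero]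
  obtain ⟨M, hMg, hMx, hcompl⟩ :=
    exists_invariant_isCompl_range_aeval hN hgN hζ0 hxg hv0 hv hq hqx hmin
  refine ⟨v, μ, hv0, hv, ?_⟩
  have hspan : LinearMap.range (LinearMap.applyₗ v ∘ₗ (aeval x).toLinearMap) ≤
      Submodule.span ℂ (Set.range fun k : ℕ => (x ^ k) v) := by
    rintro _ ⟨p, rfl⟩
    change aeval x p v ∈ _
    rw [aeval_eq_sum_range, LinearMap.sum_apply]
    exact Submodule.sum_mem _ fun k _ => Submodule.smul_mem _ _ (Submodule.subset_span ⟨k, rfl⟩)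
  refine top_le_iff.mp (le_trans (top_le_iff.mpr ?_) hspan)
  have hgW : ∀ w ∈ LinearMap.range (LinearMap.applyₗ v ∘ₗ (aeval x).toLinearMap),
      g w ∈ LinearMap.range (LinearMap.applyₗ v ∘ₗ (aeval x).toLinearMap) := by
    rintro _ ⟨p, rfl⟩
    refine ⟨μ • p.comp (C ζ * X), ?_⟩
    have h := apply_aeval_of_apply_eq_smul hxg p v
    rw [hv, map_smul] at h
    rw [map_smul]
    exact h.symm
  have hxW : ∀ w ∈ LinearMap.range (LinearMap.applyₗ v ∘ₗ (aeval x).toLinearMap),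
      x w ∈ LinearMap.range (LinearMap.applyₗ v ∘ₗ (aeval x).toLinearMap) := by
    rintro _ ⟨p, rfl⟩
    exact ⟨X * p, by simp⟩
  rcases hind _ M hgW hxW hMg hMx hcompl with h | h
  · refine absurd ?_ hv0
    rw [← Submodule.mem_bot ℂ, ← h]
    exact ⟨1, by simp⟩
  · rw [h] at hcompl
    exact eq_top_of_isCompl_bot hcompl
end

section
/- Let V be a finite-dimensional complex vector space, ω a bilinear form on V with ω(a,b) = −ω(b,a) for all a,b, m a positive even integer, ζ ∈ ℂ a primitive m-th root of unity, γ ∈ GL(V) with ω(γa, γb) = ω(a,b) for all a,b and γ^m = id, and x ∈ End(V) with ω(xa, b) + ω(a, xb) = 0 for all a,b and γ∘x = ζ·(x∘γ). Then for every eigenvector v of γ and all r, s ∈ ℕ, one has ω(x^r v, x^s v) = 0; in other words, the cyclic ℂ[x]-submodule generated by any γ-eigenvector is isotropic for ω. -/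
/-- Powers of an infinitesimal isometry `x` of `ω` are adjoint to themselves up to sign. -/
theorem apply_pow_left_of_skewAdjoint {R V : Type*} [CommRing R] [AddCommGroup V] [Module R V]
    (ω : V →ₗ[R] V →ₗ[R] R) (x : Module.End R V)
    (hx : ∀ a b : V, ω (x a) b + ω a (x b) = 0) (n : ℕ) (a b : V) :
    ω ((x ^ n) a) b = (-1) ^ n * ω a ((x ^ n) b) := by
  induction n generalizing a with
  | zero => simp
  | succ n ih =>
    rw [pow_succ, Module.End.mul_apply, ih, eq_neg_of_add_eq_zero_left (hx a _), ← pow_succ,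
      pow_succ' x, Module.End.mul_apply, pow_succ]
    ring

/-- If `γ` and `x` commute up to the scalar `ζ`, then `x ^ n` maps the `μ`-eigenspace of `γ` to
the `ζ ^ n * μ`-eigenspace. -/
theorem apply_pow_eq_smul_of_comp_eq_smul_comp {R V : Type*} [CommRing R] [AddCommGroup V]
    [Module R V] {γ x : Module.End R V} {ζ μ : R} (h : γ ∘ₗ x = ζ • (x ∘ₗ γ))
    {v : V} (hv : γ v = μ • v) (n : ℕ) :
    γ ((x ^ n) v) = (ζ ^ n * μ) • (x ^ n) v := by
  induction n with
  | zero => simpa using hv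
  | succ n ih =>
    have hc : γ (x ((x ^ n) v)) = ζ • x (γ ((x ^ n) v)) := LinearMap.congr_fun h _
    rw [pow_succ' x, Module.End.mul_apply, hc, ih, map_smul, smul_smul, pow_succ']
    ring_nf

/-- An eigenvalue of a linear automorphism satisfying `γ ^ m = 1` is an `m`-th root of unity. -/
theorem eigenvalue_pow_eq_one {K V : Type*} [Field K] [AddCommGroup V] [Module K V]
    {γ : V ≃ₗ[K] V} {m : ℕ} (hγ : γ ^ m = 1) {v : V} (hv0 : v ≠ 0) {μ : K}
    (hv : γ v = μ • v) : μ ^ m = 1 := by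
  have key : ∀ k : ℕ, (γ ^ k) v = μ ^ k • v := by
    intro k
    induction k with
    | zero => simp
    | succ k ih =>
      rw [pow_succ, LinearEquiv.mul_apply, hv, map_smul, ih, smul_smul, pow_succ']
  have h := key m
  rw [hγ, LinearEquiv.coe_one, id_eq] at h
  exact smul_left_injective K hv0 (by simpa using h.symm)

/-- Type CII isotropy: for `x ∈ 𝔤₁` of a type CII grading of `𝔰𝔭(V, ω)`, the cyclic
`ℂ[x]`-submodule generated by any `γ`-eigenvector is isotropic for `ω`. -/
theorem typeCII_cyclic_submodule_isotropic
    {V : Type*} [AddCommGroup V] [Module ℂ V] [FiniteDimensional ℂ V]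
    (ω : V →ₗ[ℂ] V →ₗ[ℂ] ℂ) (hω : ∀ a b : V, ω a b = -ω b a)
    (m : ℕ) (hm : 0 < m) (hme : Even m) (ζ : ℂ) (hζ : IsPrimitiveRoot ζ m)
    (γ : V ≃ₗ[ℂ] V) (hγω : ∀ a b : V, ω (γ a) (γ b) = ω a b) (hγm : γ ^ m = 1)
    (x : Module.End ℂ V) (hxω : ∀ a b : V, ω (x a) b + ω a (x b) = 0)
    (hγx : γ.toLinearMap ∘ₗ x = ζ • (x ∘ₗ γ.toLinearMap)) :
    ∀ (v : V) (μ : ℂ), v ≠ 0 → γ v = μ • v →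
      ∀ r s : ℕ, ω ((x ^ r) v) ((x ^ s) v) = 0 := by
  intro v μ hv0 hv r s
  rw [apply_pow_left_of_skewAdjoint ω x hxω, ← Module.End.mul_apply, ← pow_add]
  suffices h : ω v ((x ^ (r + s)) v) = 0 by rw [h, mul_zero]
  rcases Nat.even_or_odd (r + s) with he | ho
  · have h := hω ((x ^ (r + s)) v) v
    rw [apply_pow_left_of_skewAdjoint ω x hxω, he.neg_one_pow, one_mul] at h
    exact self_eq_neg.mp h
  · by_contra hne
    have : NeZero m := ⟨hm.ne'⟩
    obtain ⟨k, -, rfl⟩ := hζ.eq_pow_of_pow_eq_one (eigenvalue_pow_eq_one hγm hv0 hv)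
    have hinv := hγω v ((x ^ (r + s)) v)
    have hpow : γ ((x ^ (r + s)) v) = (ζ ^ (r + s) * ζ ^ k) • (x ^ (r + s)) v :=
      apply_pow_eq_smul_of_comp_eq_smul_comp hγx hv (r + s)
    rw [hv, hpow] at hinv
    simp only [map_smul, LinearMap.smul_apply, smul_eq_mul, ← mul_assoc] at hinv
    have hone := mul_right_cancel₀ hne (hinv.trans (one_mul _).symm)
    rw [← pow_add, ← pow_add] at hone
    have heven : Even (r + s + k + k) :=
      even_iff_two_dvd.mpr (hme.two_dvd.trans (hζ.dvd_of_pow_eq_one _ hone))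
    grind
end

section
/- Let V be a finite-dimensional complex vector space, B a symmetric bilinear form on V, m a positive even integer, ζ ∈ ℂ a primitive m-th root of unity, γ ∈ GL(V) with B(γa, γb) = B(a,b) for all a,b and γ^m = −id, and x ∈ End(V) with B(xa, b) + B(a, xb) = 0 for all a,b and γ∘x = ζ·(x∘γ). Then for every eigenvector v of γ and all r, s ∈ ℕ, one has B(x^r v, x^s v) = 0; in other words, the cyclic ℂ[x]-submodule generated by any γ-eigenvector is isotropic for B. -/
/-- The powers of a `B`-skew endomorphism are moved across `B` up to sign. -/
theorem apply_pow_left_of_skew {R V : Type*} [CommRing R] [AddCommGroup V] [Module R V]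
    {B : V →ₗ[R] V →ₗ[R] R} {x : Module.End R V}
    (hxB : ∀ a b : V, B (x a) b + B a (x b) = 0) (r : ℕ) (a b : V) :
    B ((x ^ r) a) b = (-1) ^ r * B a ((x ^ r) b) := by
  induction r generalizing b with
  | zero => simp
  | succ r ih =>
    rw [pow_succ' x r, Module.End.mul_apply, eq_neg_of_add_eq_zero_left (hxB _ b), ih,
      ← Module.End.mul_apply, ← pow_succ, pow_succ' x r, pow_succ' (-1 : R) r]
    ring

/-- If `γ ∘ x = ζ • (x ∘ γ)`, then `x ^ n` maps the `μ`-eigenspace of `γ` to the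
`ζ ^ n * μ`-eigenspace. -/
theorem apply_pow_of_comp_eq_smul {R V : Type*} [CommRing R] [AddCommGroup V] [Module R V]
    {g x : Module.End R V} {ζ μ : R} (hgx : g ∘ₗ x = ζ • (x ∘ₗ g)) {v : V}
    (hv : g v = μ • v) (n : ℕ) : g ((x ^ n) v) = (ζ ^ n * μ) • (x ^ n) v := by
  induction n with
  | zero => simpa using hv
  | succ n ih =>
    have h := LinearMap.congr_fun hgx ((x ^ n) v)
    simp only [LinearMap.comp_apply, LinearMap.smul_apply] at h
    rw [pow_succ' x n, Module.End.mul_apply, h, ih, map_smul, smul_smul]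
    congr 1
    ring

/-- An eigenvalue of `γ` with nonzero eigenvector satisfies `μ ^ m = -1` if `γ ^ m = -id`. -/
theorem eigenvalue_pow_eq_neg_one {K V : Type*} [Field K] [AddCommGroup V] [Module K V]
    {γ : V ≃ₗ[K] V} {m : ℕ} (hγm : ∀ v : V, (γ ^ m) v = -v) {v : V} {μ : K}
    (hv0 : v ≠ 0) (hv : γ v = μ • v) : μ ^ m = -1 := by
  have hpow : ∀ k : ℕ, (γ ^ k) v = μ ^ k • v := by
    intro k
    induction k with
    | zero => simp
    | succ k ih => rw [pow_succ, LinearEquiv.mul_apply, hv, map_smul, ih, smul_smul, pow_succ']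
  apply smul_left_injective K hv0
  simp only [← hpow, hγm, neg_smul, one_smul]


/-- Type BDII isotropy: for `x ∈ 𝔤₁` of a type BDII grading of `𝔰𝔬(V, B)` (with
`γ^m = −id`), the cyclic `ℂ[x]`-submodule generated by any `γ`-eigenvector is isotropic
for `B`. -/
theorem typeBDII_cyclic_submodule_isotropic
    {V : Type*} [AddCommGroup V] [Module ℂ V] [FiniteDimensional ℂ V]
    (B : V →ₗ[ℂ] V →ₗ[ℂ] ℂ) (hB : ∀ a b : V, B a b = B b a)
    (m : ℕ) (hm : 0 < m) (hme : Even m) (ζ : ℂ) (hζ : IsPrimitiveRoot ζ m)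
    (γ : V ≃ₗ[ℂ] V) (hγB : ∀ a b : V, B (γ a) (γ b) = B a b)
    (hγm : ∀ v : V, (γ ^ m) v = -v)
    (x : Module.End ℂ V) (hxB : ∀ a b : V, B (x a) b + B a (x b) = 0)
    (hγx : γ.toLinearMap ∘ₗ x = ζ • (x ∘ₗ γ.toLinearMap)) :
    ∀ (v : V) (μ : ℂ), v ≠ 0 → γ v = μ • v →
      ∀ r s : ℕ, B ((x ^ r) v) ((x ^ s) v) = 0 := by
  intro v μ hv0 hv r s
  rw [apply_pow_left_of_skew hxB, ← Module.End.mul_apply, ← pow_add]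
  suffices h : ∀ n : ℕ, B v ((x ^ n) v) = 0 by rw [h, mul_zero]
  intro n
  rcases Nat.even_or_odd n with ⟨k, rfl⟩ | hn
  · have hinv := hγB v ((x ^ (k + k)) v)
    have hx : γ ((x ^ (k + k)) v) = (ζ ^ (k + k) * μ) • (x ^ (k + k)) v :=
      apply_pow_of_comp_eq_smul hγx hv (k + k)
    rw [hv, hx, LinearMap.map_smul₂, map_smul, smul_smul, smul_eq_mul] at hinv
    by_contra hne
    have hone : μ * (ζ ^ (k + k) * μ) = 1 := mul_right_cancel₀ hne (by rw [hinv, one_mul])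
    have hμ : μ ^ m = -1 := eigenvalue_pow_eq_neg_one hγm hv0 hv
    have hζm := hζ.pow_eq_one
    obtain ⟨j, rfl⟩ := hme
    have hcontra : (-1 : ℂ) = 1 := by
      calc (-1 : ℂ) = μ ^ (j + j) * (ζ ^ (j + j)) ^ k := by rw [hμ, hζm, one_pow, mul_one]
        _ = (μ * (ζ ^ (k + k) * μ)) ^ j := by ring
        _ = 1 := by rw [hone, one_pow]
    norm_num at hcontra
  · have h := apply_pow_left_of_skew hxB n v v
    rw [hB, hn.neg_one_pow, neg_one_mul] at h
    exact self_eq_neg.mp h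
end

section
/- Let V be a finite-dimensional complex vector space, B a bilinear form on V, m₀ a positive odd integer, ζ ∈ ℂ a primitive 2m₀-th root of unity, γ ∈ GL(V) satisfying B(a,b) = B(b, γa) for all a,b and γ^{m₀} = −id, and x ∈ End(V) satisfying B(xa, b) = −ζ·B(a, xb) for all a,b and γ∘x = ζ²·(x∘γ). Then for every eigenvector v of γ and all r, s ∈ ℕ, one has B(x^r v, x^s v) = 0; in other words, the cyclic ℂ[x]-submodule generated by any γ-eigenvector is isotropic for B. -/
/-- Moving powers of a skew-semi-adjoint operator from the left to the right argument of a form. -/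
theorem bilin_pow_apply_left {R V : Type*} [CommRing R] [AddCommGroup V] [Module R V]
    (B : V →ₗ[R] V →ₗ[R] R) (ζ : R) (x : Module.End R V)
    (hxB : ∀ a b : V, B (x a) b = -(ζ * B a (x b))) (n : ℕ) (a b : V) :
    B ((x ^ n) a) b = (-ζ) ^ n * B a ((x ^ n) b) := by
  induction n generalizing b with
  | zero => simp
  | succ n ih =>
    rw [pow_succ', Module.End.mul_apply, hxB, ih, ← Module.End.mul_apply (x ^ n) x b,
      ← pow_succ, ← pow_succ']
    ring

/-- The half power of a primitive root of unity of even order is `-1`. -/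
theorem IsPrimitiveRoot.pow_half_eq_neg_one {R : Type*} [CommRing R] [IsDomain R] {ζ : R} {m : ℕ}
    (hζ : IsPrimitiveRoot ζ (2 * m)) (hm : 0 < m) : ζ ^ m = -1 :=
  (hζ.pow (by omega) (mul_comm 2 m)).eq_neg_one_of_two_right

/-- Eigenvectors of a linear equivalence are eigenvectors of its powers. -/
theorem LinearEquiv.pow_apply_of_apply_eq_smul {R V : Type*} [CommRing R] [AddCommGroup V]
    [Module R V] (γ : V ≃ₗ[R] V) {v : V} {μ : R} (hv : γ v = μ • v) (n : ℕ) :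
    (γ ^ n) v = μ ^ n • v := by
  induction n with
  | zero => simp
  | succ n ih => rw [pow_succ, LinearEquiv.mul_apply, hv, map_smul, ih, smul_smul, pow_succ']

/-- Type ²AII isotropy: for `x ∈ 𝔤₁` of a type ²AII grading (with `m = 2m₀`, `m₀` odd,
`B(a,b) = B(b, γa)`, `γ^{m₀} = −id`), the cyclic `ℂ[x]`-submodule generated by any
`γ`-eigenvector is isotropic for `B`. -/
theorem typeTwoAII_cyclic_submodule_isotropic
    {V : Type*} [AddCommGroup V] [Module ℂ V] [FiniteDimensional ℂ V]
    (B : V →ₗ[ℂ] V →ₗ[ℂ] ℂ)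
    (m₀ : ℕ) (hm₀ : 0 < m₀) (hodd : Odd m₀) (ζ : ℂ) (hζ : IsPrimitiveRoot ζ (2 * m₀))
    (γ : V ≃ₗ[ℂ] V) (hγB : ∀ a b : V, B a b = B b (γ a))
    (hγm : ∀ v : V, (γ ^ m₀) v = -v)
    (x : Module.End ℂ V) (hxB : ∀ a b : V, B (x a) b = -(ζ * B a (x b)))
    (hγx : γ.toLinearMap ∘ₗ x = (ζ ^ 2) • (x ∘ₗ γ.toLinearMap)) :
    ∀ (v : V) (μ : ℂ), v ≠ 0 → γ v = μ • v →
      ∀ r s : ℕ, B ((x ^ r) v) ((x ^ s) v) = 0 := by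
  intro v μ hv hμ r s
  have hμm : μ ^ m₀ = -1 := by
    apply smul_left_injective ℂ hv
    simpa [γ.pow_apply_of_apply_eq_smul hμ] using hγm v
  have hζm : (-ζ) ^ m₀ = 1 := by
    rw [hodd.neg_pow, hζ.pow_half_eq_neg_one hm₀, neg_neg]
  have hfix : B v ((x ^ (r + s)) v) = μ * (-ζ) ^ (r + s) * B v ((x ^ (r + s)) v) := by
    conv_lhs => rw [hγB, hμ, map_smul, smul_eq_mul, bilin_pow_apply_left B ζ x hxB]
    ring
  have hzero : B v ((x ^ (r + s)) v) = 0 := by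
    by_contra hne
    have hone : μ * (-ζ) ^ (r + s) = 1 := (right_eq_mul₀ hne).mp hfix
    have hpow : (μ * (-ζ) ^ (r + s)) ^ m₀ = -1 := by
      rw [mul_pow, hμm, pow_right_comm, hζm, one_pow, mul_one]
    rw [hone, one_pow] at hpow
    norm_num at hpow
  rw [bilin_pow_apply_left B ζ x hxB, ← Module.End.mul_apply, ← pow_add, hzero, mul_zero]
end
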